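/- For real t > 0, define H(t) = ∫_{Δ₁} dx dp/(2 x^{1/2}(1−x)^{1/2}(x+2t)^{1/2} p^{3/4}(1−p)^{1/2}) + ∫_{Δ₂} dx dq/(2 x^{1/2}(x−1)^{1/2}(x+2t)^{1/2} q^{3/4}(1−q)^{1/2}). Then H is twice differentiable on (0,∞) and satisfies the inhomogeneous differential equation −(1/2)t(1+2t)H″(t) − (1/2)(1+4t)H′(t) − (1/4)H(t) = 1/(2√t (t+1)) for all t > 0. -/

import Mathlib

/-!
Carrying out the inner integration (Fubini) turns `H(t)` into a single integral
`∫ w(x) a(x) (x+2t)^{-1/2} dx` over `(0,1)` and `(1,2)`, where `w(x) = 1/(2√|x(1-x)|)` and `a` is an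
incomplete Beta integral (`Hfun_eq`). Differentiating under the integral sign
(`hasDerivAt_stieltjes`), the Picard–Fuchs operator acts on the factor `(x+2t)^{-1/2}` alone.

The operator is exact on `w(x) (x+2t)^{-1/2}`: it gives `∓(1/4) d/dx [√|x(1-x)| (x+2t)^{-3/2}]` on
`(0,1)` and `(1,2)` respectively (`hasDerivAt_exact1`, `hasDerivAt_exact2`). The derivative of `a`
is `±2/√(x|1-x|(2-x))` (`hasDerivAt_inner1`, `hasDerivAt_inner2`), so integration by parts cancels
`√|x(1-x)|` and leaves `(1/2) ∫_0^2 (2-x)^{-1/2} (x+2t)^{-3/2} dx`. This has the primitive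
`-√((2-x)/(x+2t))/(2(1+t))`, whence the value `1/(2√t(1+t))`. The boundary terms of the integration
by parts vanish since `√|x(1-x)|` is zero at `0` and `1`, and `a(2) = 0`.

The by-parts step and the last primitive are combined into one antiderivative of
`w a · (Picard–Fuchs kernel)` on each piece (`integral_kernel1`, `integral_kernel2`).
-/


open MeasureTheory

/-- The region `Δ₁ = {(x,p) : 0 < x < 1, 0 < p ≤ (x/(2−x))²}`. -/
def Delta1 : Set (ℝ × ℝ) :=
  {z | 0 < z.1 ∧ z.1 < 1 ∧ 0 < z.2 ∧ z.2 ≤ (z.1 / (2 - z.1)) ^ 2}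

/-- The region `Δ₂ = {(x,q) : 1 < x < 2, 0 < q ≤ ((2−x)/x)²}`. -/
def Delta2 : Set (ℝ × ℝ) :=
  {z | 1 < z.1 ∧ z.1 < 2 ∧ 0 < z.2 ∧ z.2 ≤ ((2 - z.1) / z.1) ^ 2}

/-- The function `H(t) = ∫_{Δ₁} dx dp/(2x^{1/2}(1−x)^{1/2}(x+2t)^{1/2}p^{3/4}(1−p)^{1/2})
+ ∫_{Δ₂} dx dq/(2x^{1/2}(x−1)^{1/2}(x+2t)^{1/2}q^{3/4}(1−q)^{1/2})`, which equals the
value `G(t)` of the transcendental regulator on the higher Chow cycle `ξ_t`. -/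
noncomputable def Hfun (t : ℝ) : ℝ :=
  (∫ z in Delta1,
    1 / (2 * z.1 ^ ((1:ℝ)/2) * (1 - z.1) ^ ((1:ℝ)/2) * (z.1 + 2 * t) ^ ((1:ℝ)/2) *
      z.2 ^ ((3:ℝ)/4) * (1 - z.2) ^ ((1:ℝ)/2))) +
  (∫ z in Delta2,
    1 / (2 * z.1 ^ ((1:ℝ)/2) * (z.1 - 1) ^ ((1:ℝ)/2) * (z.1 + 2 * t) ^ ((1:ℝ)/2) *
      z.2 ^ ((3:ℝ)/4) * (1 - z.2) ^ ((1:ℝ)/2)))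

/-! ### The inner density, the weights and their integrability -/

/-- The inner integrand `p^{-3/4} (1-p)^{-1/2}`. -/
noncomputable def innerDensity (p : ℝ) : ℝ := p ^ (-(3/4) : ℝ) * (1 - p) ^ (-(1/2) : ℝ)

/-- The incomplete Beta integral `∫_0^y p^{-3/4} (1-p)^{-1/2} dp`. -/
noncomputable def incBeta (y : ℝ) : ℝ := ∫ p in (0:ℝ)..y, innerDensity p

/-- The weight `1 / (2 √x √(1-x))` on `(0,1)`. -/
noncomputable def weight1 (x : ℝ) : ℝ := x ^ (-(1/2) : ℝ) * (1 - x) ^ (-(1/2) : ℝ) / 2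

/-- The weight `1 / (2 √x √(x-1))` on `(1,2)`. -/
noncomputable def weight2 (x : ℝ) : ℝ := x ^ (-(1/2) : ℝ) * (x - 1) ^ (-(1/2) : ℝ) / 2

lemma intervalIntegrable_beta {a b : ℝ} (ha : -1 < a) (hb : -1 < b) :
    IntervalIntegrable (fun x : ℝ => x ^ a * (1 - x) ^ b) volume 0 1 := by
  -- Split at `1/2`, so that only one of the two factors is singular on each half.
  have h1 : IntervalIntegrable (fun x : ℝ => x ^ a * (1 - x) ^ b) volume 0 (1/2) := by
    refine (intervalIntegral.intervalIntegrable_rpow' ha).mul_continuousOn ?_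
    rw [Set.uIcc_of_le (by norm_num)]
    intro x hx
    refine ContinuousAt.continuousWithinAt ?_
    refine ContinuousAt.rpow_const (by fun_prop) (Or.inl ?_)
    linarith [hx.2]
  have h2 : IntervalIntegrable (fun x : ℝ => x ^ a * (1 - x) ^ b) volume (1/2) 1 := by
    have h3 : IntervalIntegrable (fun x : ℝ => (1 - x) ^ b) volume (1/2) 1 := by
      have := (intervalIntegral.intervalIntegrable_rpow' (a := 1/2) (b := 0) hb).comp_sub_left 1
      norm_num at this
      exact this
    refine h3.continuousOn_mul ?_
    rw [Set.uIcc_of_le (by norm_num)]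
    intro x hx
    refine ContinuousAt.continuousWithinAt ?_
    refine ContinuousAt.rpow_const (by fun_prop) (Or.inl ?_)
    linarith [hx.1]
  exact h1.trans h2

lemma intervalIntegrable_innerDensity : IntervalIntegrable innerDensity volume 0 1 :=
  intervalIntegrable_beta (by norm_num) (by norm_num)

lemma intervalIntegrable_weight1 : IntervalIntegrable weight1 volume 0 1 :=
  (intervalIntegrable_beta (by norm_num) (by norm_num)).div_const 2

lemma intervalIntegrable_weight2 : IntervalIntegrable weight2 volume 1 2 := by
  refine IntervalIntegrable.div_const ?_ 2
  have h3 : IntervalIntegrable (fun x : ℝ => (x - 1) ^ (-(1/2) : ℝ)) volume 1 2 := by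
    have := (intervalIntegral.intervalIntegrable_rpow' (a := 0) (b := 1)
      (r := (-(1/2) : ℝ)) (by norm_num)).comp_sub_right 1
    norm_num at this ⊢
    exact this
  refine h3.continuousOn_mul ?_
  rw [Set.uIcc_of_le (by norm_num)]
  intro x hx
  refine ContinuousAt.continuousWithinAt ?_
  refine ContinuousAt.rpow_const (by fun_prop) (Or.inl ?_)
  linarith [hx.1]

lemma continuousOn_incBeta : ContinuousOn incBeta (Set.Icc 0 1) := by
  have := intervalIntegral.continuousOn_primitive_interval' intervalIntegrable_innerDensity
    (a := 0) (by simp)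
  rwa [Set.uIcc_of_le (by norm_num)] at this

lemma hasDerivAt_incBeta {y : ℝ} (h0 : 0 < y) (h1 : y < 1) :
    HasDerivAt incBeta (innerDensity y) y := by
  refine intervalIntegral.integral_hasDerivAt_right ?_ ?_ ?_
  · refine intervalIntegrable_innerDensity.mono_set ?_
    rw [Set.uIcc_of_le h0.le, Set.uIcc_of_le (by norm_num)]
    exact Set.Icc_subset_Icc le_rfl h1.le
  · refine Measurable.stronglyMeasurable ?_ |>.stronglyMeasurableAtFilter
    unfold innerDensity
    fun_prop
  · unfold innerDensity
    refine ContinuousAt.mul ?_ ?_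
    · exact ContinuousAt.rpow_const (by fun_prop) (Or.inl h0.ne')
    · exact ContinuousAt.rpow_const (by fun_prop) (Or.inl (by linarith))

/-! ### Fubini and differentiation under the integral sign -/

/-- Fubini over a region under a graph, for an integrand that is a product. -/
lemma setIntegral_under_graph {l r : ℝ} (hlr : l ≤ r) {K f c : ℝ → ℝ} (hc : Measurable c)
    (hc01 : ∀ x ∈ Set.Ioo l r, 0 ≤ c x ∧ c x < 1)
    (hK : IntervalIntegrable K volume l r) (hf : IntervalIntegrable f volume 0 1) :
    ∫ z in {z : ℝ × ℝ | (l < z.1 ∧ z.1 < r) ∧ 0 < z.2 ∧ z.2 ≤ c z.1}, K z.1 * f z.2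
      = ∫ x in l..r, K x * ∫ p in (0:ℝ)..c x, f p := by
  set D := {z : ℝ × ℝ | (l < z.1 ∧ z.1 < r) ∧ 0 < z.2 ∧ z.2 ≤ c z.1} with hD
  have hDm : MeasurableSet D := by
    refine MeasurableSet.inter ?_ (MeasurableSet.inter ?_ ?_)
    · exact (measurableSet_lt measurable_const measurable_fst).inter
        (measurableSet_lt measurable_fst measurable_const)
    · exact measurableSet_lt measurable_const measurable_snd
    · exact measurableSet_le measurable_snd (hc.comp measurable_fst)
  have hsub : D ⊆ Set.Ioc l r ×ˢ Set.Ioc (0:ℝ) 1 := by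
    rintro ⟨x, p⟩ ⟨⟨h1, h2⟩, h3, h4⟩
    have := (hc01 x ⟨h1, h2⟩).2
    exact ⟨⟨h1, h2.le⟩, h3, by linarith⟩
  have hint : IntegrableOn (fun z : ℝ × ℝ => K z.1 * f z.2) (Set.Ioc l r ×ˢ Set.Ioc (0:ℝ) 1)
      (volume.prod volume) := by
    rw [IntegrableOn, ← Measure.prod_restrict]
    refine Integrable.mul_prod ?_ ?_
    · exact (intervalIntegrable_iff_integrableOn_Ioc_of_le hlr).1 hK
    · exact (intervalIntegrable_iff_integrableOn_Ioc_of_le zero_le_one).1 hf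
  have e1 : ∫ z in D, K z.1 * f z.2 =
      ∫ z in Set.Ioc l r ×ˢ Set.Ioc (0:ℝ) 1, D.indicator (fun z => K z.1 * f z.2) z
        ∂(volume.prod volume) := by
    rw [setIntegral_indicator hDm, Set.inter_eq_right.2 hsub]; rfl
  rw [e1, setIntegral_prod _ (hint.indicator hDm), intervalIntegral.integral_of_le hlr,
    integral_Ioc_eq_integral_Ioo, integral_Ioc_eq_integral_Ioo]
  refine setIntegral_congr_fun measurableSet_Ioo fun x hx => ?_
  obtain ⟨hc0, hc1⟩ := hc01 x hx
  have e2 : ∀ p : ℝ, D.indicator (fun z => K z.1 * f z.2) (x, p) =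
      (Set.Ioc 0 (c x)).indicator (fun p => K x * f p) p := by
    intro p
    simp only [Set.indicator_apply, hD, Set.mem_ofPred_eq, Set.mem_Ioc]
    simp [hx.1, hx.2]
  simp only [e2]
  rw [setIntegral_indicator measurableSet_Ioc, intervalIntegral.integral_of_le hc0,
    Set.inter_eq_right.2 (Set.Ioc_subset_Ioc le_rfl hc1.le), integral_const_mul]

/-- Differentiation under the integral sign for a generalised Stieltjes transform. -/
lemma hasDerivAt_stieltjes {l r : ℝ} (hl : 0 ≤ l) (hlr : l ≤ r) {W : ℝ → ℝ}
    (hW : IntervalIntegrable W volume l r) {s : ℝ} (hs : s < 0) {t : ℝ} (ht : 0 < t) :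
    HasDerivAt (fun t => ∫ x in l..r, W x * (x + 2 * t) ^ s)
      (2 * s * ∫ x in l..r, W x * (x + 2 * t) ^ (s - 1)) t := by
  have hrw : 2 * s * ∫ x in l..r, W x * (x + 2 * t) ^ (s - 1) =
      ∫ x in l..r, W x * (2 * s * (x + 2 * t) ^ (s - 1)) := by
    rw [← intervalIntegral.integral_const_mul]
    congr 1
    ext x
    ring
  rw [hrw]
  have hcont : ∀ (s t : ℝ), 0 < t → ContinuousOn (fun x : ℝ => (x + 2 * t) ^ s) (Set.uIcc l r) := by
    intro s t ht x hx
    rw [Set.uIcc_of_le hlr] at hx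
    refine ContinuousAt.continuousWithinAt ?_
    exact ContinuousAt.rpow_const (by fun_prop) (Or.inl (by linarith [hx.1]))
  have hsub : Set.uIoc l r ⊆ Set.Ioc l r := by rw [Set.uIoc_of_le hlr]
  -- For parameters above `t / 2` and `x ≥ 0` one has `x + 2u ≥ t`, and `s - 1 < 0`, so `t ^ (s - 1)`
  -- dominates `(x + 2u) ^ (s - 1)` uniformly.
  refine (intervalIntegral.hasDerivAt_integral_of_dominated_loc_of_deriv_le
    (F := fun t x => W x * (x + 2 * t) ^ s)
    (F' := fun t x => W x * (2 * s * (x + 2 * t) ^ (s - 1)))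
    (bound := fun x => |W x| * (2 * |s| * t ^ (s - 1)))
    (s := Set.Ioi (t / 2)) (Ioi_mem_nhds (by linarith)) ?_ ?_ ?_ ?_ ?_ ?_).2
  · filter_upwards [Ioi_mem_nhds ht] with u hu
    exact (hW.mul_continuousOn (hcont s u hu)).aestronglyMeasurable_restrict_uIoc
  · exact hW.mul_continuousOn (hcont s t ht)
  · exact (hW.mul_continuousOn
      (continuousOn_const.mul (hcont (s - 1) t ht))).aestronglyMeasurable_restrict_uIoc
  · refine Filter.Eventually.of_forall fun x hx u hu => ?_
    have hx' := hsub hx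
    have hu' : t / 2 < u := hu
    have h1 : t ≤ x + 2 * u := by linarith [hx'.1]
    rw [Real.norm_eq_abs, abs_mul, abs_mul, abs_mul, abs_two,
      abs_of_nonneg (Real.rpow_nonneg (ht.le.trans h1) _)]
    exact mul_le_mul_of_nonneg_left (mul_le_mul_of_nonneg_left
      (Real.rpow_le_rpow_of_nonpos ht h1 (by linarith)) (by positivity)) (abs_nonneg _)
  · exact hW.abs.mul_const _
  · refine Filter.Eventually.of_forall fun x hx u hu => ?_
    have hx' := hsub hx
    have hu' : t / 2 < u := hu
    have h1 : 0 < x + 2 * u := by linarith [hx'.1]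
    have h2 : HasDerivAt (fun u : ℝ => x + 2 * u) 2 u := by
      simpa using ((hasDerivAt_id u).const_mul 2).const_add x
    have := (h2.rpow_const (p := s) (Or.inl h1.ne')).const_mul (W x)
    exact this

/-! ### Derivatives of the inner integrals -/

lemma rpow_neg_one_half {u : ℝ} (hu : 0 < u) : u ^ (-(1/2) : ℝ) = 1 / √u := by
  rw [Real.rpow_neg hu.le, Real.sqrt_eq_rpow]
  exact (one_div _).symm

lemma rpow_neg_three_halves {u : ℝ} (hu : 0 < u) : u ^ (-(3/2) : ℝ) = 1 / √u ^ 3 := by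
  rw [Real.rpow_neg hu.le, Real.sqrt_eq_rpow, ← Real.rpow_natCast, ← Real.rpow_mul hu.le, one_div]
  norm_num

lemma rpow_neg_five_halves {u : ℝ} (hu : 0 < u) : u ^ (-(5/2) : ℝ) = 1 / √u ^ 5 := by
  rw [Real.rpow_neg hu.le, Real.sqrt_eq_rpow, ← Real.rpow_natCast, ← Real.rpow_mul hu.le, one_div]
  norm_num

/-- The inner integrand in a form where its radicals are resolved. -/
lemma innerDensity_eq {m n : ℝ} (hm : 0 < m) (hn : 0 < n) (h : 1 - m ^ 4 = n ^ 2) :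
    innerDensity (m ^ 4) = 1 / (m ^ 3 * n) := by
  have h1 : (m ^ 4) ^ (-(3/4) : ℝ) = 1 / m ^ 3 := by
    rw [Real.rpow_neg (by positivity), ← Real.rpow_natCast, ← Real.rpow_mul hm.le, one_div,
      ← Real.rpow_natCast]
    norm_num
  rw [innerDensity, h, h1, rpow_neg_one_half (by positivity), Real.sqrt_sq hn.le]
  field_simp

lemma hasDerivAt_inner1 {x : ℝ} (h0 : 0 < x) (h1 : x < 1) :
    HasDerivAt (fun x : ℝ => incBeta ((x / (2 - x)) ^ 2)) (2 / (√x * √(1 - x) * √(2 - x))) x := by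
  -- Naming the radicals turns the claim into a polynomial identity in `a`, `s`, `b`.
  obtain ⟨a, ha, hax⟩ : ∃ a, 0 < a ∧ √x = a := ⟨_, Real.sqrt_pos.2 h0, rfl⟩
  obtain ⟨s, hs, hsx⟩ : ∃ a, 0 < a ∧ √(1 - x) = a := ⟨_, Real.sqrt_pos.2 (by linarith), rfl⟩
  obtain ⟨b, hb, hbx⟩ : ∃ a, 0 < a ∧ √(2 - x) = a := ⟨_, Real.sqrt_pos.2 (by linarith), rfl⟩
  have ha2 : a ^ 2 = x := by rw [← hax, Real.sq_sqrt h0.le]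
  have hs2 : s ^ 2 = 1 - x := by rw [← hsx, Real.sq_sqrt (by linarith)]
  have hb2 : b ^ 2 = 2 - x := by rw [← hbx, Real.sq_sqrt (by linarith)]
  have hc : (x / (2 - x)) ^ 2 = (a / b) ^ 4 := by rw [← hb2, ← ha2]; simp only [div_pow]; ring
  have hn : 1 - (a / b) ^ 4 = (2 * s / b ^ 2) ^ 2 := by
    have : b ^ 4 - a ^ 4 = 4 * s ^ 2 := by
      rw [hs2, show b ^ 4 = (b ^ 2) ^ 2 by ring, show a ^ 4 = (a ^ 2) ^ 2 by ring, ha2, hb2]; ring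
    field_simp
    linarith
  have hlt : (a / b) ^ 4 < 1 := by
    have : 0 < (2 * s / b ^ 2) ^ 2 := by positivity
    linarith
  have hd : HasDerivAt (fun x : ℝ => (x / (2 - x)) ^ 2) (4 * x / (2 - x) ^ 3) x := by
    have hne : 2 - x ≠ 0 := by linarith
    have := (((hasDerivAt_id x).div ((hasDerivAt_id x).const_sub 2) hne).pow 2)
    refine this.congr_deriv ?_
    simp
    field_simp
    ring
  have hg := hasDerivAt_incBeta (y := (x / (2 - x)) ^ 2) (by rw [hc]; positivity) (by rwa [hc])
  refine (hg.comp x hd).congr_deriv ?_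
  rw [hc, innerDensity_eq (by positivity) (by positivity) hn, hax, hsx, hbx, ← hb2, ← ha2]
  field_simp
  ring

lemma hasDerivAt_inner2 {x : ℝ} (h1 : 1 < x) (h2 : x < 2) :
    HasDerivAt (fun x : ℝ => incBeta (((2 - x) / x) ^ 2))
      (-2 / (√x * √(x - 1) * √(2 - x))) x := by
  have h0 : 0 < x := by linarith
  obtain ⟨a, ha, hax⟩ : ∃ a, 0 < a ∧ √x = a := ⟨_, Real.sqrt_pos.2 h0, rfl⟩
  obtain ⟨s, hs, hsx⟩ : ∃ a, 0 < a ∧ √(x - 1) = a := ⟨_, Real.sqrt_pos.2 (by linarith), rfl⟩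
  obtain ⟨b, hb, hbx⟩ : ∃ a, 0 < a ∧ √(2 - x) = a := ⟨_, Real.sqrt_pos.2 (by linarith), rfl⟩
  have ha2 : a ^ 2 = x := by rw [← hax, Real.sq_sqrt h0.le]
  have hs2 : s ^ 2 = x - 1 := by rw [← hsx, Real.sq_sqrt (by linarith)]
  have hb2 : b ^ 2 = 2 - x := by rw [← hbx, Real.sq_sqrt (by linarith)]
  have hc : ((2 - x) / x) ^ 2 = (b / a) ^ 4 := by rw [← hb2, ← ha2]; simp only [div_pow]; ring
  have hn : 1 - (b / a) ^ 4 = (2 * s / a ^ 2) ^ 2 := by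
    have : a ^ 4 - b ^ 4 = 4 * s ^ 2 := by
      rw [hs2, show b ^ 4 = (b ^ 2) ^ 2 by ring, show a ^ 4 = (a ^ 2) ^ 2 by ring, ha2, hb2]; ring
    field_simp
    linarith
  have hlt : (b / a) ^ 4 < 1 := by
    have : 0 < (2 * s / a ^ 2) ^ 2 := by positivity
    linarith
  have hd : HasDerivAt (fun x : ℝ => ((2 - x) / x) ^ 2) (-4 * (2 - x) / x ^ 3) x := by
    have := ((((hasDerivAt_id x).const_sub 2).div (hasDerivAt_id x) h0.ne').pow 2)
    refine this.congr_deriv ?_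
    simp
    field_simp
    ring
  have hg := hasDerivAt_incBeta (y := ((2 - x) / x) ^ 2) (by rw [hc]; positivity) (by rwa [hc])
  refine (hg.comp x hd).congr_deriv ?_
  rw [hc, innerDensity_eq (by positivity) (by positivity) hn, hax, hsx, hbx, ← hb2, ← ha2]
  field_simp
  ring

lemma continuousOn_inner1 :
    ContinuousOn (fun x : ℝ => incBeta ((x / (2 - x)) ^ 2)) (Set.Icc 0 1) := by
  refine continuousOn_incBeta.comp (t := Set.Icc 0 1) ?_ ?_
  · exact (continuousOn_id.div (by fun_prop) fun x hx => by linarith [hx.2]).pow 2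
  · intro x hx
    have h : 0 < 2 - x := by linarith [hx.2]
    exact ⟨by positivity, pow_le_one₀ (div_nonneg hx.1 h.le)
      (by rw [div_le_one h]; linarith [hx.2])⟩

lemma continuousOn_inner2 :
    ContinuousOn (fun x : ℝ => incBeta (((2 - x) / x) ^ 2)) (Set.Icc 1 2) := by
  refine continuousOn_incBeta.comp (t := Set.Icc 0 1) ?_ ?_
  · exact (ContinuousOn.div (by fun_prop) continuousOn_id fun x hx => by
      simp only [id]; linarith [hx.1]).pow 2
  · intro x hx
    have h : 0 < x := by linarith [hx.1]
    exact ⟨by positivity, pow_le_one₀ (div_nonneg (by linarith [hx.2]) h.le)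
      (by rw [div_le_one h]; linarith [hx.1])⟩

/-! ### Exactness of the Picard–Fuchs kernel -/

/-- The Picard–Fuchs operator in `t` applied to `(x + 2t)^{-1/2}`. -/
noncomputable def kernelPF (t x : ℝ) : ℝ :=
  -(1/2) * t * (1 + 2 * t) * (3 * (x + 2 * t) ^ (-(5/2) : ℝ))
    - (1/2) * (1 + 4 * t) * (-(x + 2 * t) ^ (-(3/2) : ℝ)) - (1/4) * (x + 2 * t) ^ (-(1/2) : ℝ)

/-- `√((2-x)/(x+2t))`: up to the factor `-(1+t)`, a primitive of `(2-x)^{-1/2} (x+2t)^{-3/2}`. -/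
noncomputable def primitiveE (t x : ℝ) : ℝ := √(2 - x) * (x + 2 * t) ^ (-(1/2) : ℝ)

lemma hasDerivAt_shift_rpow {t x : ℝ} (hu : 0 < x + 2 * t) (s : ℝ) :
    HasDerivAt (fun x : ℝ => (x + 2 * t) ^ s) (s * (x + 2 * t) ^ (s - 1)) x := by
  have := ((hasDerivAt_id x).add_const (2 * t)).rpow_const (p := s) (Or.inl hu.ne')
  simpa using this

lemma hasDerivAt_primitiveE {t x : ℝ} (hu : 0 < x + 2 * t) (hx : x < 2) :
    HasDerivAt (primitiveE t) (-(1 + t) / (√(2 - x) * √(x + 2 * t) ^ 3)) x := by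
  have h1 : HasDerivAt (fun x : ℝ => √(2 - x)) (-1 / (2 * √(2 - x))) x :=
    ((hasDerivAt_id x).const_sub 2).sqrt (by simp only [id]; linarith)
  refine (h1.mul (hasDerivAt_shift_rpow hu _)).congr_deriv ?_
  rw [show (-(1/2) - 1 : ℝ) = -(3/2) by norm_num, rpow_neg_one_half hu, rpow_neg_three_halves hu]
  obtain ⟨b, hb, hbx⟩ : ∃ a, 0 < a ∧ √(2 - x) = a := ⟨_, Real.sqrt_pos.2 (by linarith), rfl⟩
  obtain ⟨v, hv, hvx⟩ : ∃ a, 0 < a ∧ √(x + 2 * t) = a := ⟨_, Real.sqrt_pos.2 hu, rfl⟩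
  have hb2 : b ^ 2 = 2 - x := by rw [← hbx, Real.sq_sqrt (by linarith)]
  have hv2 : v ^ 2 = x + 2 * t := by rw [← hvx, Real.sq_sqrt hu.le]
  rw [hbx, hvx]
  field_simp
  linarith

lemma continuousOn_shift_rpow {l r t : ℝ} (hl : 0 ≤ l) (ht : 0 < t) (s : ℝ) :
    ContinuousOn (fun x : ℝ => (x + 2 * t) ^ s) (Set.Icc l r) := fun x hx =>
  (hasDerivAt_shift_rpow (by linarith [hx.1]) s).continuousAt.continuousWithinAt

lemma continuousOn_kernelPF {l r t : ℝ} (hl : 0 ≤ l) (ht : 0 < t) :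
    ContinuousOn (kernelPF t) (Set.Icc l r) :=
  ((continuousOn_const.mul (continuousOn_const.mul (continuousOn_shift_rpow hl ht _))).sub
    (continuousOn_const.mul (continuousOn_shift_rpow hl ht _).neg)).sub
    (continuousOn_const.mul (continuousOn_shift_rpow hl ht _))

lemma continuousOn_primitiveE {l r t : ℝ} (hl : 0 ≤ l) (ht : 0 < t) :
    ContinuousOn (primitiveE t) (Set.Icc l r) :=
  ContinuousOn.mul (by fun_prop) (continuousOn_shift_rpow hl ht _)

/-- On `(0,1)`, weight times Picard–Fuchs kernel is the exact derivative
`-(1/4) d/dx [√(x(1-x)) (x+2t)^{-3/2}]`. -/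
lemma hasDerivAt_exact1 {t x : ℝ} (ht : 0 < t) (h0 : 0 < x) (h1 : x < 1) :
    HasDerivAt (fun x : ℝ => √(x * (1 - x)) * (x + 2 * t) ^ (-(3/2) : ℝ))
      (-4 * (weight1 x * kernelPF t x)) x := by
  have hu : 0 < x + 2 * t := by linarith
  have h1' : 0 < 1 - x := by linarith
  have hq : HasDerivAt (fun x : ℝ => √(x * (1 - x))) ((1 - 2 * x) / (2 * √(x * (1 - x)))) x := by
    have := ((hasDerivAt_id x).mul ((hasDerivAt_id x).const_sub 1)).sqrt
      (by simp only [id, Pi.mul_apply]; positivity)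
    refine this.congr_deriv ?_
    simp only [id, Pi.mul_apply]
    ring
  refine (hq.mul (hasDerivAt_shift_rpow hu _)).congr_deriv ?_
  rw [show (-(3/2) - 1 : ℝ) = -(5/2) by norm_num, weight1, kernelPF, rpow_neg_one_half hu,
    rpow_neg_three_halves hu, rpow_neg_five_halves hu, rpow_neg_one_half h0,
    rpow_neg_one_half h1', Real.sqrt_mul h0.le]
  obtain ⟨a, ha, hax⟩ : ∃ a, 0 < a ∧ √x = a := ⟨_, Real.sqrt_pos.2 h0, rfl⟩
  obtain ⟨s, hs, hsx⟩ : ∃ a, 0 < a ∧ √(1 - x) = a := ⟨_, Real.sqrt_pos.2 h1', rfl⟩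
  obtain ⟨v, hv, hvx⟩ : ∃ a, 0 < a ∧ √(x + 2 * t) = a := ⟨_, Real.sqrt_pos.2 hu, rfl⟩
  have ha2 : x = a ^ 2 := by rw [← hax, Real.sq_sqrt h0.le]
  have hs2 : s ^ 2 = 1 - x := by rw [← hsx, Real.sq_sqrt h1'.le]
  have hv2 : v ^ 2 = x + 2 * t := by rw [← hvx, Real.sq_sqrt hu.le]
  rw [hax, hsx, hvx]
  have ht2 : t = (v ^ 2 - a ^ 2) / 2 := by linarith
  have hs3 : s ^ 2 = 1 - a ^ 2 := by linarith
  subst ht2 ha2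
  clear hs2 hv2 hax hsx hvx hq
  field_simp
  rw [hs3]
  ring

/-- On `(1,2)`, weight times Picard–Fuchs kernel is the exact derivative
`(1/4) d/dx [√(x(x-1)) (x+2t)^{-3/2}]`. -/
lemma hasDerivAt_exact2 {t x : ℝ} (ht : 0 < t) (h1 : 1 < x) :
    HasDerivAt (fun x : ℝ => √(x * (x - 1)) * (x + 2 * t) ^ (-(3/2) : ℝ))
      (4 * (weight2 x * kernelPF t x)) x := by
  have hu : 0 < x + 2 * t := by linarith
  have h0 : 0 < x := by linarith
  have h1' : 0 < x - 1 := by linarith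
  have hq : HasDerivAt (fun x : ℝ => √(x * (x - 1))) ((2 * x - 1) / (2 * √(x * (x - 1)))) x := by
    have := ((hasDerivAt_id x).mul ((hasDerivAt_id x).sub_const 1)).sqrt
      (by simp only [id, Pi.mul_apply]; positivity)
    refine this.congr_deriv ?_
    simp only [id, Pi.mul_apply]
    ring
  refine (hq.mul (hasDerivAt_shift_rpow hu _)).congr_deriv ?_
  rw [show (-(3/2) - 1 : ℝ) = -(5/2) by norm_num, weight2, kernelPF, rpow_neg_one_half hu,
    rpow_neg_three_halves hu, rpow_neg_five_halves hu, rpow_neg_one_half h0,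
    rpow_neg_one_half h1', Real.sqrt_mul h0.le]
  obtain ⟨a, ha, hax⟩ : ∃ a, 0 < a ∧ √x = a := ⟨_, Real.sqrt_pos.2 h0, rfl⟩
  obtain ⟨s, hs, hsx⟩ : ∃ a, 0 < a ∧ √(x - 1) = a := ⟨_, Real.sqrt_pos.2 h1', rfl⟩
  obtain ⟨v, hv, hvx⟩ : ∃ a, 0 < a ∧ √(x + 2 * t) = a := ⟨_, Real.sqrt_pos.2 hu, rfl⟩
  have ha2 : x = a ^ 2 := by rw [← hax, Real.sq_sqrt h0.le]
  have hs2 : s ^ 2 = x - 1 := by rw [← hsx, Real.sq_sqrt h1'.le]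
  have hv2 : v ^ 2 = x + 2 * t := by rw [← hvx, Real.sq_sqrt hu.le]
  rw [hax, hsx, hvx]
  have ht2 : t = (v ^ 2 - a ^ 2) / 2 := by linarith
  have hs3 : s ^ 2 = a ^ 2 - 1 := by linarith
  subst ht2 ha2
  clear hs2 hv2 hax hsx hvx hq
  field_simp
  rw [hs3]
  ring

/-! ### Integrating the kernel over each piece -/

/-- The weight for `H` on `(0,1)` after the inner integration. -/
noncomputable def total1 (x : ℝ) : ℝ := weight1 x * incBeta ((x / (2 - x)) ^ 2)

/-- The weight for `H` on `(1,2)` after the inner integration. -/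
noncomputable def total2 (x : ℝ) : ℝ := weight2 x * incBeta (((2 - x) / x) ^ 2)

lemma intervalIntegrable_total1 : IntervalIntegrable total1 volume 0 1 :=
  intervalIntegrable_weight1.mul_continuousOn
    (by rw [Set.uIcc_of_le (by norm_num)]; exact continuousOn_inner1)

lemma intervalIntegrable_total2 : IntervalIntegrable total2 volume 1 2 :=
  intervalIntegrable_weight2.mul_continuousOn
    (by rw [Set.uIcc_of_le (by norm_num)]; exact continuousOn_inner2)

/-- Fundamental theorem of calculus on `(0,1)`; the by-parts boundary terms vanish because
`√(x(1-x))` does. -/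
lemma integral_kernel1 {t : ℝ} (ht : 0 < t) :
    ∫ x in (0:ℝ)..1, total1 x * kernelPF t x =
      1 / (2 * (1 + t)) * (primitiveE t 0 - primitiveE t 1) := by
  have key := intervalIntegral.integral_eq_sub_of_hasDerivAt_of_le (a := 0) (b := 1)
    (f := fun x => -(1/4) * (incBeta ((x / (2 - x)) ^ 2) *
      (√(x * (1 - x)) * (x + 2 * t) ^ (-(3/2) : ℝ))) - 1 / (2 * (1 + t)) * primitiveE t x)
    (f' := fun x => total1 x * kernelPF t x) zero_le_one ?_ ?_ ?_
  · rw [key]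
    simp
    ring
  · refine (continuousOn_const.mul (continuousOn_inner1.mul (ContinuousOn.mul (by fun_prop)
      (continuousOn_shift_rpow le_rfl ht _)))).sub
      (continuousOn_const.mul (continuousOn_primitiveE le_rfl ht))
  · rintro x ⟨h0, h1⟩
    have hu : 0 < x + 2 * t := by linarith
    have h1' : 0 < 1 - x := by linarith
    have h2' : 0 < 2 - x := by linarith
    refine ((((hasDerivAt_inner1 h0 h1).mul (hasDerivAt_exact1 ht h0 h1)).const_mul _).sub
      ((hasDerivAt_primitiveE hu (by linarith)).const_mul _)).congr_deriv ?_
    rw [total1, Real.sqrt_mul h0.le, rpow_neg_three_halves hu]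
    have := Real.sqrt_pos.2 h0
    have := Real.sqrt_pos.2 h1'
    have := Real.sqrt_pos.2 h2'
    have := Real.sqrt_pos.2 hu
    field_simp
    ring
  · exact intervalIntegrable_total1.mul_continuousOn
      (by rw [Set.uIcc_of_le (by norm_num)]; exact continuousOn_kernelPF le_rfl ht)

/-- Fundamental theorem of calculus on `(1,2)`; the by-parts boundary terms vanish because
`√(x(x-1))` is zero at `1` and the inner integral is empty at `2`. -/
lemma integral_kernel2 {t : ℝ} (ht : 0 < t) :
    ∫ x in (1:ℝ)..2, total2 x * kernelPF t x =
      1 / (2 * (1 + t)) * (primitiveE t 1 - primitiveE t 2) := by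
  have key := intervalIntegral.integral_eq_sub_of_hasDerivAt_of_le (a := 1) (b := 2)
    (f := fun x => (1/4) * (incBeta (((2 - x) / x) ^ 2) *
      (√(x * (x - 1)) * (x + 2 * t) ^ (-(3/2) : ℝ))) - 1 / (2 * (1 + t)) * primitiveE t x)
    (f' := fun x => total2 x * kernelPF t x) one_le_two ?_ ?_ ?_
  · rw [key]
    have : incBeta 0 = 0 := by simp [incBeta]
    simp [this]
    ring
  · refine (continuousOn_const.mul (continuousOn_inner2.mul (ContinuousOn.mul (by fun_prop)
      (continuousOn_shift_rpow zero_le_one ht _)))).sub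
      (continuousOn_const.mul (continuousOn_primitiveE zero_le_one ht))
  · rintro x ⟨h1, h2⟩
    have h0 : 0 < x := by linarith
    have hu : 0 < x + 2 * t := by linarith
    have h1' : 0 < x - 1 := by linarith
    have h2' : 0 < 2 - x := by linarith
    refine ((((hasDerivAt_inner2 h1 h2).mul (hasDerivAt_exact2 ht h1)).const_mul _).sub
      ((hasDerivAt_primitiveE hu h2).const_mul _)).congr_deriv ?_
    rw [total2, Real.sqrt_mul h0.le, rpow_neg_three_halves hu]
    have := Real.sqrt_pos.2 h0
    have := Real.sqrt_pos.2 h1'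
    have := Real.sqrt_pos.2 h2'
    have := Real.sqrt_pos.2 hu
    field_simp
    ring
  · exact intervalIntegrable_total2.mul_continuousOn
      (by rw [Set.uIcc_of_le (by norm_num)]; exact continuousOn_kernelPF zero_le_one ht)

/-! ### The function H as a single integral, and its differential equation -/

/-- The single-integral Stieltjes transforms `∫ total · (x+2t)^s` over both pieces. -/
noncomputable def stieltjes (s t : ℝ) : ℝ :=
  (∫ x in (0:ℝ)..1, total1 x * (x + 2 * t) ^ s) + ∫ x in (1:ℝ)..2, total2 x * (x + 2 * t) ^ s

lemma hasDerivAt_stieltjes_sum {s t : ℝ} (hs : s < 0) (ht : 0 < t) :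
    HasDerivAt (stieltjes s) (2 * s * stieltjes (s - 1) t) t := by
  refine ((hasDerivAt_stieltjes le_rfl zero_le_one intervalIntegrable_total1 hs ht).add
    (hasDerivAt_stieltjes zero_le_one one_le_two intervalIntegrable_total2 hs ht)).congr_deriv ?_
  rw [stieltjes]
  ring

/-- Fubini for both regions. The restriction `0 < t` makes `(x+2t)^{-1/2}` bounded. -/
lemma Hfun_eq {t : ℝ} (ht : 0 < t) : Hfun t = stieltjes (-(1/2)) t := by
  rw [Hfun, stieltjes]
  congr 1
  · have hK : IntervalIntegrable (fun x : ℝ => weight1 x * (x + 2 * t) ^ (-(1/2) : ℝ)) volume 0 1 :=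
      intervalIntegrable_weight1.mul_continuousOn
        (by rw [Set.uIcc_of_le (by norm_num)]; exact continuousOn_shift_rpow le_rfl ht _)
    have hF := setIntegral_under_graph zero_le_one (c := fun x => (x / (2 - x)) ^ 2)
      (by fun_prop) ?_ hK intervalIntegrable_innerDensity
    · have hset : Delta1 = {z : ℝ × ℝ | (0 < z.1 ∧ z.1 < 1) ∧ 0 < z.2 ∧
          z.2 ≤ (z.1 / (2 - z.1)) ^ 2} := by
        ext z; simp only [Delta1, Set.mem_ofPred_eq, and_assoc]
      have hm : MeasurableSet Delta1 := by
        refine (measurableSet_lt measurable_const measurable_fst).inter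
          ((measurableSet_lt measurable_fst measurable_const).inter
          ((measurableSet_lt measurable_const measurable_snd).inter
          (measurableSet_le measurable_snd (by fun_prop))))
      rw [← hset] at hF
      trans ∫ z in Delta1, weight1 z.1 * (z.1 + 2 * t) ^ (-(1/2) : ℝ) * innerDensity z.2
      · refine setIntegral_congr_fun hm ?_
        rintro ⟨x, p⟩ ⟨h0, h1, h2, h3⟩
        simp only at h0 h1 h2 h3 ⊢
        have hp : p ≤ 1 := h3.trans (pow_le_one₀ (div_nonneg h0.le (by linarith))
          (by rw [div_le_one (by linarith)]; linarith))
        simp only [weight1, innerDensity]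
        rw [Real.rpow_neg h0.le, Real.rpow_neg (by linarith), Real.rpow_neg (by linarith),
          Real.rpow_neg h2.le, Real.rpow_neg (by linarith)]
        simp only [one_div, mul_inv]
        ring
      · rw [hF]
        refine intervalIntegral.integral_congr fun x _ => ?_
        simp only [total1, incBeta]
        ring
    · intro x hx
      have h : 0 < 2 - x := by linarith [hx.2]
      exact ⟨by positivity, pow_lt_one₀ (div_nonneg hx.1.le h.le)
        (by rw [div_lt_one h]; linarith [hx.2]) two_ne_zero⟩
  · have hK : IntervalIntegrable (fun x : ℝ => weight2 x * (x + 2 * t) ^ (-(1/2) : ℝ)) volume 1 2 :=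
      intervalIntegrable_weight2.mul_continuousOn
        (by rw [Set.uIcc_of_le (by norm_num)]; exact continuousOn_shift_rpow zero_le_one ht _)
    have hF := setIntegral_under_graph one_le_two (c := fun x => ((2 - x) / x) ^ 2)
      (by fun_prop) ?_ hK intervalIntegrable_innerDensity
    · have hset : Delta2 = {z : ℝ × ℝ | (1 < z.1 ∧ z.1 < 2) ∧ 0 < z.2 ∧
          z.2 ≤ ((2 - z.1) / z.1) ^ 2} := by
        ext z; simp only [Delta2, Set.mem_ofPred_eq, and_assoc]
      have hm : MeasurableSet Delta2 := by
        refine (measurableSet_lt measurable_const measurable_fst).inter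
          ((measurableSet_lt measurable_fst measurable_const).inter
          ((measurableSet_lt measurable_const measurable_snd).inter
          (measurableSet_le measurable_snd (by fun_prop))))
      rw [← hset] at hF
      trans ∫ z in Delta2, weight2 z.1 * (z.1 + 2 * t) ^ (-(1/2) : ℝ) * innerDensity z.2
      · refine setIntegral_congr_fun hm ?_
        rintro ⟨x, p⟩ ⟨h0, h1, h2, h3⟩
        simp only at h0 h1 h2 h3 ⊢
        have hp : p ≤ 1 := h3.trans (pow_le_one₀ (div_nonneg (by linarith) (by linarith))
          (by rw [div_le_one (by linarith)]; linarith))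
        simp only [weight2, innerDensity]
        rw [Real.rpow_neg (by linarith), Real.rpow_neg (by linarith), Real.rpow_neg (by linarith),
          Real.rpow_neg h2.le, Real.rpow_neg (by linarith)]
        simp only [one_div, mul_inv]
        ring
      · rw [hF]
        refine intervalIntegral.integral_congr fun x _ => ?_
        simp only [total2, incBeta]
        ring
    · intro x hx
      have h : 0 < x := by linarith [hx.1]
      exact ⟨by positivity, pow_lt_one₀ (div_nonneg (by linarith [hx.2]) h.le)
        (by rw [div_lt_one h]; linarith [hx.1]) two_ne_zero⟩

lemma integral_kernel_expand {l r : ℝ} (hl : 0 ≤ l) (hlr : l ≤ r) {W : ℝ → ℝ}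
    (hW : IntervalIntegrable W volume l r) {t : ℝ} (ht : 0 < t) :
    ∫ x in l..r, W x * kernelPF t x =
      -(1/2) * t * (1 + 2 * t) * (3 * ∫ x in l..r, W x * (x + 2 * t) ^ (-(5/2) : ℝ))
      - (1/2) * (1 + 4 * t) * (-∫ x in l..r, W x * (x + 2 * t) ^ (-(3/2) : ℝ))
      - (1/4) * ∫ x in l..r, W x * (x + 2 * t) ^ (-(1/2) : ℝ) := by
  have hI : ∀ s : ℝ, IntervalIntegrable (fun x => W x * (x + 2 * t) ^ s) volume l r := fun s =>
    hW.mul_continuousOn (by rw [Set.uIcc_of_le hlr]; exact continuousOn_shift_rpow hl ht s)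
  have e : ∀ x, W x * kernelPF t x =
      -(1/2) * t * (1 + 2 * t) * 3 * (W x * (x + 2 * t) ^ (-(5/2) : ℝ))
      + (1/2) * (1 + 4 * t) * (W x * (x + 2 * t) ^ (-(3/2) : ℝ))
      - (1/4) * (W x * (x + 2 * t) ^ (-(1/2) : ℝ)) := fun x => by rw [kernelPF]; ring
  simp only [e]
  rw [intervalIntegral.integral_sub (((hI _).const_mul _).add ((hI _).const_mul _))
    ((hI _).const_mul _), intervalIntegral.integral_add ((hI _).const_mul _) ((hI _).const_mul _),
    intervalIntegral.integral_const_mul, intervalIntegral.integral_const_mul,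
    intervalIntegral.integral_const_mul]
  ring

/-- `H` is twice differentiable on `(0,∞)` and satisfies the inhomogeneous
Picard–Fuchs equation `𝒟_t(H) = 1/(2√t(t+1))`. -/
theorem stmt16 : ∀ t : ℝ, 0 < t →
    DifferentiableAt ℝ Hfun t ∧ DifferentiableAt ℝ (deriv Hfun) t ∧
    -(1/2) * t * (1 + 2 * t) * deriv (deriv Hfun) t
      - (1/2) * (1 + 4 * t) * deriv Hfun t - (1/4) * Hfun t
      = 1 / (2 * Real.sqrt t * (t + 1)) := by
  intro t ht
  have hD1 : ∀ u : ℝ, 0 < u → HasDerivAt Hfun (-stieltjes (-(3/2)) u) u := by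
    intro u hu
    have h := hasDerivAt_stieltjes_sum (s := -(1/2)) (by norm_num) hu
    rw [show (-(1/2) - 1 : ℝ) = -(3/2) by norm_num] at h
    refine (h.congr_deriv (by ring)).congr_of_eventuallyEq ?_
    filter_upwards [Ioi_mem_nhds hu] with w hw using Hfun_eq hw
  have hD2 : HasDerivAt (deriv Hfun) (3 * stieltjes (-(5/2)) t) t := by
    have h := (hasDerivAt_stieltjes_sum (s := -(3/2)) (by norm_num) ht).neg
    rw [show (-(3/2) - 1 : ℝ) = -(5/2) by norm_num] at h
    refine (h.congr_deriv (by ring)).congr_of_eventuallyEq ?_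
    filter_upwards [Ioi_mem_nhds ht] with w hw using (hD1 w hw).deriv
  refine ⟨(hD1 t ht).differentiableAt, hD2.differentiableAt, ?_⟩
  rw [hD2.deriv, (hD1 t ht).deriv, Hfun_eq ht]
  have k1 := (integral_kernel_expand le_rfl zero_le_one intervalIntegrable_total1 ht).symm.trans
    (integral_kernel1 ht)
  have k2 := (integral_kernel_expand zero_le_one one_le_two intervalIntegrable_total2 ht).symm.trans
    (integral_kernel2 ht)
  have hE2 : primitiveE t 2 = 0 := by simp [primitiveE]
  have hE0 : primitiveE t 0 = 1 / √t := by
    rw [primitiveE, zero_add, rpow_neg_one_half (by positivity), Real.sqrt_mul zero_le_two,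
      sub_zero]
    have := Real.sqrt_pos.2 ht
    field_simp
  have hR : 1 / (2 * √t * (t + 1)) = 1 / (2 * (1 + t)) * (primitiveE t 0 - primitiveE t 1) +
      1 / (2 * (1 + t)) * (primitiveE t 1 - primitiveE t 2) := by
    rw [hE2, hE0]
    have := Real.sqrt_pos.2 ht
    field_simp
    ring
  rw [hR, ← k1, ← k2]
  simp only [stieltjes]
  ring
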